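/- Let C = {a, b} and let W = {w ∈ C^ω : both a and b occur infinitely often in w} (a prefix-independent objective). For m ≥ 1 let G_m be the C-graph with vertex set {0, 1, …, m−1} and edges i →a j and j →b i for all i < j. Then G_m satisfies W, and every monotone partially ordered C-graph (U, ≤) which satisfies W and admits a morphism G_m → U contains an antichain of cardinality m (i.e., has width ≥ m). Hence no monotone graph of width < m satisfying W embeds G_m, even though W has ε-memory ≤ 2. -/

import Mathlib

universe u v

open Cardinal

/-- A `C`-pregraph on vertex type `V`: a set of coloured directed edges. -/
structure Pregraph (C : Type u) (V : Type u) : Type u where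
  Edge : V → C → V → Prop

namespace Pregraph

variable {C V V' : Type u}

/-- A pregraph is a graph when it has no sinks. -/
def NoSinks (G : Pregraph C V) : Prop :=
  ∀ v : V, ∃ c v', G.Edge v c v'

/-- An infinite path with vertex sequence `π` and colour sequence `γ`. -/
def InfPath (G : Pregraph C V) (π : ℕ → V) (γ : ℕ → C) : Prop :=
  ∀ i, G.Edge (π i) (γ i) (π (i + 1))

/-- A finite path starting at a given vertex, recorded as a list of (colour, target) pairs. -/
def ListPath (G : Pregraph C V) : V → List (C × V) → Prop
  | _, [] => True
  | v, e :: p => G.Edge v e.1 e.2 ∧ G.ListPath e.2 p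

/-- Endpoint of a finite path. -/
def pathEnd : V → List (C × V) → V
  | v, [] => v
  | _, e :: p => pathEnd e.2 p

/-- A pretree: every vertex is reached from the root by a unique finite path. -/
def IsPretree (G : Pregraph C V) (t₀ : V) : Prop :=
  ∀ t : V, ∃! p : List (C × V), G.ListPath t₀ p ∧ pathEnd t₀ p = t

/-- A tree: a pretree without sinks. -/
def IsTree (G : Pregraph C V) (t₀ : V) : Prop :=
  G.NoSinks ∧ G.IsPretree t₀

/-- Morphisms of pregraphs. -/
def IsMorphism (G : Pregraph C V) (H : Pregraph C V') (φ : V → V') : Prop :=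
  ∀ ⦃v c v'⦄, G.Edge v c v' → H.Edge (φ v) c (φ v')

/-- The value of a vertex with respect to a valuation: the supremum of the values of
infinite paths from the vertex. -/
noncomputable def valueAt {X : Type v} [CompleteLinearOrder X]
    (G : Pregraph C V) (val : (ℕ → C) → X) (v : V) : X :=
  sSup {x | ∃ π γ, π 0 = v ∧ G.InfPath π γ ∧ val γ = x}

/-- A vertex satisfies an objective `W` if every infinite path from it has colour
sequence in `W`. -/
def VertexSat (G : Pregraph C V) (W : Set (ℕ → C)) (v : V) : Prop :=
  ∀ π γ, π 0 = v → G.InfPath π γ → γ ∈ W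

/-- A pregraph satisfies an objective if all its vertices do. -/
def Sat (G : Pregraph C V) (W : Set (ℕ → C)) : Prop :=
  ∀ v, G.VertexSat W v

/-- Monotonicity of a pregraph with respect to an order relation `le`:
`u ≥ v →c v' ≥ u'` implies `u →c u'`. -/
def MonotoneRel (G : Pregraph C V) (le : V → V → Prop) : Prop :=
  ∀ ⦃u v c v' u'⦄, le v u → G.Edge v c v' → le u' v' → G.Edge u c u'

end Pregraph

/-- The strict relation associated to `le`. -/
def strictOf {V : Type u} (le : V → V → Prop) : V → V → Prop :=
  fun a b => le a b ∧ a ≠ b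

/-- `w' : ℕ → C` is a completion of `w : ℕ → Option C` if the projection of `w`
(deleting all `none`'s, i.e. all ε's) is a prefix of (or equal to) `w'`. -/
def IsCompletion {C : Type u} (w : ℕ → Option C) (w' : ℕ → C) : Prop :=
  ∀ (k n : ℕ) (h : n < ((List.range k).filterMap w).length),
    ((List.range k).filterMap w).get ⟨n, h⟩ = w' n

/-- The ε-extension of a valuation, where `none` plays the role of ε.
If the projection of `w` is infinite, its unique completion `w'` yields `val w'`;
otherwise this is the infimum of `val` over all completions. -/
noncomputable def epsExtension {C : Type u} {X : Type v} [CompleteLinearOrder X]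
    (val : (ℕ → C) → X) : (ℕ → Option C) → X :=
  fun w => sInf {x | ∃ w', IsCompletion w w' ∧ val w' = x}

/-- The ε-extension of an objective. -/
def epsObjective {C : Type u} (W : Set (ℕ → C)) : Set (ℕ → Option C) :=
  {w | ∃ w', IsCompletion w w' ∧ w' ∈ W}

/-- Strategies: `S` is a graph, `πS` a morphism sending `s₀` to `v₀`, and every Adam move
can be simulated from every state above the corresponding vertex. -/
def IsStrategy {C V VS : Type u} (G : Pregraph C V) (VEve : Set V) (v₀ : V)
    (S : Pregraph C VS) (πS : VS → V) (s₀ : VS) : Prop :=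
  S.NoSinks ∧ S.IsMorphism G πS ∧ πS s₀ = v₀ ∧
    ∀ v, v ∉ VEve → ∀ c v', G.Edge v c v' →
      ∀ s, πS s = v → ∃ s', πS s' = v' ∧ S.Edge s c s'

/-- The value of a game: the infimum of the values of its strategies. -/
noncomputable def gameValue {C V : Type u} {X : Type v} [CompleteLinearOrder X]
    (G : Pregraph C V) (VEve : Set V) (v₀ : V) (val : (ℕ → C) → X) : X :=
  sInf {x | ∃ (VS : Type u) (S : Pregraph C VS) (πS : VS → V) (s₀ : VS),
    IsStrategy G VEve v₀ S πS s₀ ∧ S.valueAt val s₀ = x}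

/-- An ε-strategy: a product strategy over `M` (vertices form a subset `D ⊆ V × M`,
projection is the first component) whose ε-edges do not update the memory. -/
def IsEpsStrategy {C V M : Type u} (G : Pregraph (Option C) V) (VEve : Set V) (v₀ : V)
    (D : Set (V × M)) (S : Pregraph (Option C) ↥D) (s₀ : ↥D) : Prop :=
  IsStrategy G VEve v₀ S (fun s => (s : V × M).1) s₀ ∧
    ∀ s s' : ↥D, S.Edge s none s' → (s : V × M).2 = (s' : V × M).2

/-- A product strategy is chromatic if memory updates only depend on the current memory
state and the colour read. -/
def IsChromaticStrat {C V M : Type u} (D : Set (V × M)) (S : Pregraph C ↥D) : Prop :=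
  ∃ δ : M → C → M, ∀ (s s' : ↥D) (c : C), S.Edge s c s' → (s' : V × M).2 = δ (s : V × M).2 c

/-- ε-separated monotone graph over `M` (with `part` the partition into fibres):
`v ≤ v' ↔ v' →ε v` is a partial order making the graph monotone, ε-edges stay inside
fibres, and each fibre is totally ordered. -/
structure IsEpsSeparated {C V M : Type u} (U : Pregraph (Option C) V) (part : V → M) : Prop where
  refl : ∀ v, U.Edge v none v
  antisymm : ∀ ⦃v v'⦄, U.Edge v none v' → U.Edge v' none v → v = v'
  mono : ∀ ⦃u v c v' u'⦄, U.Edge u none v → U.Edge v c v' → U.Edge v' none u' → U.Edge u c u'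
  sameFiber : ∀ ⦃v v'⦄, U.Edge v none v' → part v = part v'
  total : ∀ ⦃v v'⦄, part v = part v' → U.Edge v none v' ∨ U.Edge v' none v

/-- Well-foundedness of the order `v ≤ v' ↔ v' →ε v` of an ε-separated graph. -/
def EpsWellFounded {C V : Type u} (U : Pregraph (Option C) V) : Prop :=
  WellFounded (fun v v' => U.Edge v' none v ∧ v ≠ v')

/-- A chromatic ε-separated graph: colours act uniformly on the parts. -/
def IsChromaticGraph {C V M : Type u} (U : Pregraph (Option C) V) (part : V → M) : Prop :=
  ∃ δ : M → C → M, ∀ ⦃v c v'⦄, U.Edge v (some c) v' → part v' = δ (part v) c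

/-- `(κ, val)`-universality for a valuation: every tree of cardinality `< κ` maps into `U`
by a morphism preserving the value at the root. -/
def IsUniversal {C VU : Type u} {X : Type v} [CompleteLinearOrder X]
    (κ : Cardinal.{u}) (val : (ℕ → C) → X) (U : Pregraph C VU) : Prop :=
  ∀ (VT : Type u) (T : Pregraph C VT) (t₀ : VT), T.IsTree t₀ → #VT < κ →
    ∃ φ : VT → VU, T.IsMorphism U φ ∧ U.valueAt val (φ t₀) ≤ T.valueAt val t₀

/-- A valuation has ε-memory ≤ μ: in every ε-game, the value is attained by an ε-strategy
of memory ≤ μ. -/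
def HasEpsMemLE {C : Type u} {X : Type v} [CompleteLinearOrder X]
    (val : (ℕ → C) → X) (μ : Cardinal.{u}) : Prop :=
  ∀ (V : Type u) (G : Pregraph (Option C) V), G.NoSinks → ∀ (VEve : Set V) (v₀ : V),
    ∃ (M : Type u) (D : Set (V × M)) (S : Pregraph (Option C) ↥D) (s₀ : ↥D),
      #M ≤ μ ∧ IsEpsStrategy G VEve v₀ D S s₀ ∧
      S.valueAt (epsExtension val) s₀ ≤ gameValue G VEve v₀ (epsExtension val)

/-- Eve wins a game with objective `W`: there exists a winning strategy. -/
def EveWins {C V : Type u} (G : Pregraph C V) (VEve : Set V) (v₀ : V)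
    (W : Set (ℕ → C)) : Prop :=
  ∃ (VS : Type u) (S : Pregraph C VS) (πS : VS → V) (s₀ : VS),
    IsStrategy G VEve v₀ S πS s₀ ∧ S.VertexSat W s₀

/-- An objective has ε-memory ≤ μ: in every ε-game that Eve wins, she has a winning
ε-strategy of memory ≤ μ. -/
def ObjEpsMemLE {C : Type u} (W : Set (ℕ → C)) (μ : Cardinal.{u}) : Prop :=
  ∀ (V : Type u) (G : Pregraph (Option C) V), G.NoSinks → ∀ (VEve : Set V) (v₀ : V),
    EveWins G VEve v₀ (epsObjective W) →
    ∃ (M : Type u) (D : Set (V × M)) (S : Pregraph (Option C) ↥D) (s₀ : ↥D),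
      #M ≤ μ ∧ IsEpsStrategy G VEve v₀ D S s₀ ∧ S.VertexSat (epsObjective W) s₀

/-- An objective has ε-memory < μ: in every ε-game that Eve wins, she has a winning
ε-strategy of memory < μ. -/
def ObjEpsMemLT {C : Type u} (W : Set (ℕ → C)) (μ : Cardinal.{u}) : Prop :=
  ∀ (V : Type u) (G : Pregraph (Option C) V), G.NoSinks → ∀ (VEve : Set V) (v₀ : V),
    EveWins G VEve v₀ (epsObjective W) →
    ∃ (M : Type u) (D : Set (V × M)) (S : Pregraph (Option C) ↥D) (s₀ : ↥D),
      #M < μ ∧ IsEpsStrategy G VEve v₀ D S s₀ ∧ S.VertexSat (epsObjective W) s₀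

/-- An objective has ε-free memory ≤ μ: in every game that Eve wins, she has a winning
strategy all of whose fibres have cardinality ≤ μ. -/
def ObjMemLE {C : Type u} (W : Set (ℕ → C)) (μ : Cardinal.{u}) : Prop :=
  ∀ (V : Type u) (G : Pregraph C V), G.NoSinks → ∀ (VEve : Set V) (v₀ : V),
    EveWins G VEve v₀ W →
    ∃ (VS : Type u) (S : Pregraph C VS) (πS : VS → V) (s₀ : VS),
      IsStrategy G VEve v₀ S πS s₀ ∧ (∀ v : V, #(↥(πS ⁻¹' {v})) ≤ μ) ∧
      S.VertexSat W s₀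

/-- The objective over `C = {a, b}` (here `a = true`, `b = false`): both letters occur
infinitely often. -/
def bothInfOften : Set (ℕ → Bool) :=
  {w | (∀ N, ∃ n, N ≤ n ∧ w n = true) ∧ (∀ N, ∃ n, N ≤ n ∧ w n = false)}

/-- The graph `G_m` on `{0, …, m-1}` with edges `i →a j` and `j →b i` for `i < j`. -/
def Gm (m : ℕ) : Pregraph Bool (Fin m) :=
  ⟨fun i c j => (c = true ∧ i < j) ∨ (c = false ∧ j < i)⟩

/-! Given a strategy `S` winning from all its states, memory state `x` means that the letter `x` is
awaited. A path of `S` reading infinitely many letters cannot avoid `x` forever, so `S` has an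
ordinal rank that does not increase along `ε` and strictly decreases along every letter other than
`x`. While waiting for `x`, Eve plays from a state of minimal `x`-rank above the current vertex,
and passes to the next letter, in a cyclic order, once `x` has been read. If she waited for `x`
forever while reading infinitely many letters, the `x`-rank would decrease infinitely often.

For the width, a comparison `φ i ≤ φ j` with `i ≠ j` would turn, by monotonicity, the edge from
`φ i` to `φ j` into a loop, and a loop reads only one letter. -/

open Filter

section Sequences

theorem not_frequently_lt_of_eventually_le {α : Type*} [Preorder α] [WellFoundedLT α] {r : ℕ → α}
    (h : ∀ᶠ n in atTop, r (n + 1) ≤ r n) : ¬ ∃ᶠ n in atTop, r (n + 1) < r n := by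
  obtain ⟨N, hN⟩ := eventually_atTop.1 h
  have hanti : AntitoneOn r (Set.Ici N) := antitoneOn_nat_Ici_of_succ_le hN
  obtain ⟨_, ⟨n, hn, rfl⟩, hmin⟩ :=
    wellFounded_lt.has_min (r '' Set.Ici N) ⟨r N, N, Set.self_mem_Ici, rfl⟩
  intro hlt
  obtain ⟨k, hnk, hk⟩ := frequently_atTop.1 hlt n
  have hNk : N ≤ k := le_trans hn hnk
  exact hmin (r (k + 1)) ⟨k + 1, hNk.trans k.le_succ, rfl⟩ (hk.trans_le (hanti hn hNk hnk))

theorem frequently_not_lt_succ {α : Type*} [Preorder α] [WellFoundedLT α] (r : ℕ → α) :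
    ∃ᶠ n in atTop, ¬ r (n + 1) < r n :=
  fun h ↦ by
    simp only [not_not] at h
    exact not_frequently_lt_of_eventually_le (h.mono fun _ ↦ le_of_lt) h.frequently

theorem exists_section_le {A B α : Type*} [LinearOrder α] [WellFoundedLT α] [Nonempty A]
    (π : A → B) (r : A → α) : ∃ σ : B → A, ∀ a, π (σ (π a)) = π a ∧ r (σ (π a)) ≤ r a := by
  have hmin : ∀ b ∈ Set.range π, ∃ a, π a = b ∧ ∀ a', π a' = b → r a ≤ r a' := fun b hb ↦
    ⟨Function.argminOn r {a | π a = b} hb, Function.argminOn_mem r _ hb,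
      fun _ ha' ↦ Function.argminOn_le r _ ha'⟩
  choose! σ hσ hσmin using hmin
  exact ⟨σ, fun a ↦ ⟨hσ _ ⟨a, rfl⟩, hσmin _ ⟨a, rfl⟩ a rfl⟩⟩

end Sequences

section Completions

variable {C : Type u} {w : ℕ → Option C} {w' : ℕ → C}

theorem length_filterMap_range (w : ℕ → Option C) (k : ℕ) :
    ((List.range k).filterMap w).length = Nat.count (fun i ↦ (w i).isSome) k := by
  induction k with
  | zero => simp
  | succ k ih => cases h : w k <;> simp [List.range_succ, Nat.count_succ, ih, h]

theorem isCompletion_iff :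
    IsCompletion w w' ↔ ∀ k c, w k = some c → w' (Nat.count (fun i ↦ (w i).isSome) k) = c := by
  constructor
  · intro h k c hk
    simpa [List.range_succ, hk, length_filterMap_range] using
      (h (k + 1) ((List.range k).filterMap w).length (by simp [List.range_succ, hk])).symm
  · intro h k
    induction k with
    | zero => simp
    | succ k ih =>
      intro n hn
      cases hk : w k with
      | none => simpa [List.range_succ, hk] using ih n (by simpa [List.range_succ, hk] using hn)
      | some c =>
        rcases lt_or_ge n ((List.range k).filterMap w).length with hlt | hge
        · simpa [List.range_succ, hk, List.getElem_append_left hlt] using ih n hlt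
        · have hn_eq : n = ((List.range k).filterMap w).length := by
            simp only [List.range_succ, List.filterMap_append, hk, Option.some.injEq,
              List.filterMap_cons_some, List.filterMap_nil, List.length_append,
              List.length_cons, List.length_nil, zero_add, Order.lt_add_one_iff] at hn
            exact le_antisymm hn hge
          subst hn_eq
          simpa [List.range_succ, hk, length_filterMap_range] using (h k c hk).symm

theorem IsCompletion.shift (h : IsCompletion w w') (n : ℕ) :
    IsCompletion (fun i ↦ w (n + i))
      (fun i ↦ w' (Nat.count (fun i ↦ (w i).isSome) n + i)) :=
  isCompletion_iff.2 fun k c hk ↦ by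
    simpa [Nat.count_add] using isCompletion_iff.1 h (n + k) c hk

theorem IsCompletion.frequently_eq_iff (h : IsCompletion w w')
    (hw : ∃ᶠ n in atTop, (w n).isSome) (c : C) :
    (∃ᶠ n in atTop, w' n = c) ↔ ∃ᶠ n in atTop, w n = some c := by
  have hinf := Nat.frequently_atTop_iff_infinite.1 hw
  simp only [frequently_atTop]
  constructor <;> intro hc N
  · obtain ⟨n, hNn, hn⟩ := hc N
    obtain ⟨d, hd⟩ := Option.isSome_iff_exists.1 (Nat.nth_mem_of_infinite hinf n)
    have hwd := isCompletion_iff.1 h _ d hd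
    rw [Nat.count_nth_of_infinite hinf, hn] at hwd
    exact ⟨_, hNn.trans (Nat.nth_strictMono hinf).le_apply, hwd ▸ hd⟩
  · obtain ⟨k, hk, hkc⟩ := hc (Nat.nth (fun i ↦ (w i).isSome) N)
    refine ⟨_, ?_, isCompletion_iff.1 h k c hkc⟩
    simpa only [Nat.count_nth_of_infinite hinf] using
      Nat.count_monotone (fun i ↦ (w i).isSome) hk

theorem exists_isCompletion [Nonempty C] (w : ℕ → Option C) : ∃ w', IsCompletion w w' := by
  inhabit C
  refine ⟨fun n ↦ (w (Nat.nth (fun i ↦ (w i).isSome) n)).getD default,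
    isCompletion_iff.2 fun k c hk ↦ ?_⟩
  simp [Nat.nth_count (p := fun i ↦ (w i).isSome) (n := k) (by simp [hk]), hk]

theorem exists_isCompletion_eventuallyEq (hw : ∀ᶠ n in atTop, w n = none) (v : ℕ → C) :
    ∃ w', IsCompletion w w' ∧ w' =ᶠ[atTop] v := by
  obtain ⟨N, hN⟩ := eventually_atTop.1 hw
  have : Nonempty C := ⟨v 0⟩
  obtain ⟨w', hw'⟩ := exists_isCompletion w
  let ℓ := Nat.count (fun i ↦ (w i).isSome) N
  refine ⟨fun n ↦ if n < ℓ then w' n else v n, isCompletion_iff.2 fun k c hk ↦ ?_, ?_⟩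
  · have hkN : k < N := by
      by_contra hNk
      simp [hN k (not_lt.1 hNk)] at hk
    rw [if_pos (Nat.count_strict_mono (by simp [hk]) hkN)]
    exact isCompletion_iff.1 hw' k c hk
  · filter_upwards [eventually_ge_atTop ℓ] with n hn
    exact if_neg hn.not_gt

end Completions

section Objectives

variable {C : Type u}

/-- Closure under taking tails: one half of prefix-independence, which is the half needed to
restrict a strategy to the vertices satisfying the objective. -/
def IsShiftClosed (W : Set (ℕ → C)) : Prop :=
  ∀ w ∈ W, ∀ n, (fun i ↦ w (n + i)) ∈ W

theorem IsShiftClosed.epsObjective {W : Set (ℕ → C)} (hW : IsShiftClosed W) :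
    IsShiftClosed (epsObjective W) :=
  fun _ ⟨w', hc, hw'⟩ n ↦ ⟨_, hc.shift n, hW w' hw' _⟩

/-- The objective "every letter occurs infinitely often", which for two letters is
`bothInfOften`. -/
def allInfOften (C : Type u) : Set (ℕ → C) :=
  {w | ∀ c, ∃ᶠ n in atTop, w n = c}

theorem allInfOften_bool : allInfOften Bool = bothInfOften := by
  ext w
  simp [allInfOften, bothInfOften, frequently_atTop, and_comm]

theorem isShiftClosed_allInfOften : IsShiftClosed (allInfOften C) := by
  intro w hw n c
  have h := hw c
  rw [← map_add_atTop_eq_nat n, frequently_map] at h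
  simpa only [add_comm n] using h

theorem const_notMem_allInfOften [Nontrivial C] (c : C) : (fun _ ↦ c) ∉ allInfOften C := by
  obtain ⟨d, hd⟩ := exists_ne c
  exact fun h ↦ hd ((h d).exists.choose_spec).symm

theorem allInfOften_nonempty [Countable C] [Nonempty C] : (allInfOften C).Nonempty := by
  obtain ⟨g, hg⟩ := exists_surjective_nat C
  refine ⟨fun n ↦ g n.unpair.1, fun c ↦ frequently_atTop.2 fun N ↦ ?_⟩
  obtain ⟨k, rfl⟩ := hg c
  exact ⟨Nat.pair k N, Nat.right_le_pair k N, by simp⟩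

theorem mem_epsObjective_allInfOften [Countable C] [Nonempty C] {w : ℕ → Option C} :
    w ∈ epsObjective (allInfOften C) ↔
      ((∃ᶠ n in atTop, (w n).isSome) → ∀ c, ∃ᶠ n in atTop, w n = some c) := by
  constructor
  · rintro ⟨w', hc, hw'⟩ hw c
    exact (hc.frequently_eq_iff hw c).1 (hw' c)
  · intro h
    by_cases hw : ∃ᶠ n in atTop, (w n).isSome
    · obtain ⟨w', hc⟩ := exists_isCompletion w
      exact ⟨w', hc, fun c ↦ (hc.frequently_eq_iff hw c).2 (h hw c)⟩
    · obtain ⟨v, hv⟩ := allInfOften_nonempty (C := C)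
      obtain ⟨w', hc, hw'v⟩ := exists_isCompletion_eventuallyEq (by simpa using hw) v
      exact ⟨w', hc, fun c ↦ (hv c).mp (hw'v.mono fun n hn hvn ↦ hn.trans hvn)⟩

end Objectives

namespace Pregraph

section Paths

variable {C V : Type u} {G : Pregraph C V} {W : Set (ℕ → C)}

theorem NoSinks.exists_infPath (hG : G.NoSinks) (v : V) : ∃ π γ, π 0 = v ∧ G.InfPath π γ := by
  choose c next hnext using hG
  refine ⟨fun n ↦ next^[n] v, fun n ↦ c (next^[n] v), rfl, fun n ↦ ?_⟩
  simpa only [Function.iterate_succ_apply'] using hnext (next^[n] v)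

theorem VertexSat.of_edge (hW : IsShiftClosed W) {v v' : V} {c : C} (hv : G.VertexSat W v)
    (h : G.Edge v c v') : G.VertexSat W v' := by
  rintro π γ rfl hπ
  have hcons : G.InfPath (fun n ↦ Nat.casesOn n v π) (fun n ↦ Nat.casesOn n c γ) := by
    rintro (_ | n)
    exacts [h, hπ n]
  simpa only [add_comm 1] using hW _ (hv _ _ rfl hcons) 1

theorem Sat.not_edge_self (hG : G.Sat W) {c : C} (hc : (fun _ ↦ c) ∉ W) (v : V) :
    ¬ G.Edge v c v :=
  fun h ↦ hc (hG v (fun _ ↦ v) _ rfl fun _ ↦ h)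

end Paths

section Ranks

variable {C V : Type u} {G : Pregraph (Option C) V} {K : Set C}

/-- A rank for the letters in `K`: a potential that does not increase along `ε`-edges and strictly
decreases along edges with colour in `K`. Nothing is required of the other edges. -/
structure IsRank {α : Type*} [Preorder α] (G : Pregraph (Option C) V) (K : Set C) (r : V → α) :
    Prop where
  le_of_none : ∀ ⦃u v⦄, G.Edge u none v → r v ≤ r u
  lt_of_mem : ∀ ⦃u v c⦄, c ∈ K → G.Edge u (some c) v → r v < r u

/-- `G.EpsStepsThen K n u v`: there is a path from `u` to `v` made of `n` edges coloured `ε`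
followed by one edge with colour in `K`. -/
def EpsStepsThen (G : Pregraph (Option C) V) (K : Set C) : ℕ → V → V → Prop
  | 0, u, v => ∃ c ∈ K, G.Edge u (some c) v
  | n + 1, u, v => ∃ u', G.Edge u none u' ∧ G.EpsStepsThen K n u' v

theorem wellFounded_epsStepsThen
    (hG : ∀ π γ, G.InfPath π γ → (∀ n, ∀ c ∈ γ n, c ∈ K) → ∀ᶠ n in atTop, γ n = none) :
    WellFounded fun v u ↦ ∃ n, G.EpsStepsThen K n u v := by
  by_contra hwf
  set R : V → V → Prop := fun v u ↦ ∃ n, G.EpsStepsThen K n u v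
  obtain ⟨s, hs⟩ : ∃ s, ¬ Acc R s := by
    by_contra! h
    exact hwf ⟨h⟩
  have hcont : ∀ u, ¬ Acc R u → ∃ n v, G.EpsStepsThen K n u v ∧ ¬ Acc R v := by
    intro u hu
    by_contra! h
    exact hu ⟨u, fun v ⟨n, hn⟩ ↦ h n v hn⟩
  -- The counter of remaining `ε`-edges keeps the path from ending in an infinite sequence of `ε`.
  let T := {p : V × ℕ // ∃ v, G.EpsStepsThen K p.2 p.1 v ∧ ¬ Acc R v}
  let H : Pregraph (Option C) T := ⟨fun p o q ↦ G.Edge p.1.1 o q.1.1 ∧ (∀ c ∈ o, c ∈ K) ∧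
    (o = none → q.1.2 < p.1.2)⟩
  have hH : H.NoSinks := by
    rintro ⟨⟨u, _ | n⟩, v, huv, hv⟩
    · obtain ⟨c, hc, he⟩ := huv
      obtain ⟨n, v', hn⟩ := hcont v hv
      exact ⟨some c, ⟨(v, n), v', hn⟩, he, by simpa using hc, by simp⟩
    · obtain ⟨u', he, hn⟩ := huv
      exact ⟨none, ⟨(u', n), v, hn, hv⟩, he, by simp, fun _ ↦ n.lt_succ_self⟩
  obtain ⟨n, v, hn⟩ := hcont s hs
  obtain ⟨p, γ, -, hp⟩ := hH.exists_infPath ⟨(s, n), v, hn⟩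
  refine frequently_not_lt_succ (fun i ↦ (p i).1.2) ?_
  filter_upwards [hG (fun i ↦ (p i).1.1) γ (fun i ↦ (hp i).1) fun i ↦ (hp i).2.1] with i hi
  exact not_not.2 ((hp i).2.2 hi)

theorem exists_isRank
    (hG : ∀ π γ, G.InfPath π γ → (∀ n, ∀ c ∈ γ n, c ∈ K) → ∀ᶠ n in atTop, γ n = none) :
    ∃ r : V → Ordinal.{u}, G.IsRank K r := by
  let R : V → V → Prop := fun v u ↦ ∃ n, G.EpsStepsThen K n u v
  have : IsWellFounded V R := ⟨wellFounded_epsStepsThen hG⟩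
  refine ⟨IsWellFounded.rank R, fun u v h ↦ ?_, fun u v c hc h ↦
    IsWellFounded.rank_lt_of_rel ⟨0, c, hc, h⟩⟩
  rw [IsWellFounded.rank_eq R v]
  refine Ordinal.iSup_le fun ⟨t, n, ht⟩ ↦ Order.succ_le_of_lt ?_
  exact IsWellFounded.rank_lt_of_rel ⟨n + 1, v, h, ht⟩

theorem Sat.exists_isRank_compl [Countable C] (hG : G.Sat (epsObjective (allInfOften C))) (x : C) :
    ∃ r : V → Ordinal.{u}, G.IsRank {x}ᶜ r := by
  have : Nonempty C := ⟨x⟩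
  refine exists_isRank fun π γ hπ hγ ↦ ?_
  by_contra hsome
  have hinf : ∃ᶠ n in atTop, (γ n).isSome := by
    simpa [Option.isSome_iff_ne_none, Filter.Frequently] using hsome
  obtain ⟨n, hn⟩ := (mem_epsObjective_allInfOften.1 (hG _ π γ rfl hπ) hinf x).exists
  exact hγ n x hn rfl

end Ranks

end Pregraph

section Strategies

variable {C V VS M : Type u}

theorem EveWins.exists_sat {W : Set (ℕ → C)} (hW : IsShiftClosed W) {G : Pregraph C V}
    {VEve : Set V} {v₀ : V} (h : EveWins G VEve v₀ W) :
    ∃ (VS : Type u) (S : Pregraph C VS) (πS : VS → V) (s₀ : VS),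
      IsStrategy G VEve v₀ S πS s₀ ∧ S.Sat W := by
  obtain ⟨VS, S, πS, s₀, ⟨hsinks, hmor, hs₀, hadam⟩, hsat⟩ := h
  refine ⟨{s // S.VertexSat W s}, ⟨fun s c t ↦ S.Edge s c t⟩, fun s ↦ πS s, ⟨s₀, hsat⟩,
    ⟨fun s ↦ ?_, fun _ _ _ h ↦ hmor h, hs₀, fun v hv c v' he s hs ↦ ?_⟩, ?_⟩
  · obtain ⟨c, t, h⟩ := hsinks s
    exact ⟨c, ⟨t, s.2.of_edge hW h⟩, h⟩
  · obtain ⟨t, ht, h⟩ := hadam v hv c v' he s hs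
    exact ⟨⟨t, s.2.of_edge hW h⟩, ht, h⟩
  · rintro _ π γ rfl hπ
    exact (π 0).2 (fun n ↦ π n) γ rfl hπ

/-- The product strategy which, at vertex `v` with memory `m`, plays as `S` does from `σ m v`, and
updates the memory by `upd`. It forgets the state of `S` reached by the move. -/
def memoryStrategy (S : Pregraph (Option C) VS) (πS : VS → V) (σ : M → V → VS)
    (upd : M → Option C → M) : Pregraph (Option C) ↥{p : V × M | p.1 ∈ Set.range πS} :=
  ⟨fun p o q ↦ ∃ t, S.Edge (σ p.1.2 p.1.1) o t ∧ πS t = q.1.1 ∧ q.1.2 = upd p.1.2 o⟩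

theorem IsStrategy.isEpsStrategy_memoryStrategy {G : Pregraph (Option C) V} {VEve : Set V}
    {S : Pregraph (Option C) VS} {πS : VS → V} {s₀ : VS} {v₀ : V}
    (hS : IsStrategy G VEve v₀ S πS s₀) {σ : M → V → VS}
    (hσ : ∀ m, ∀ v ∈ Set.range πS, πS (σ m v) = v)
    {upd : M → Option C → M} (hupd : ∀ m, upd m none = m) (m₀ : M) :
    IsEpsStrategy G VEve v₀ _ (memoryStrategy S πS σ upd) ⟨(v₀, m₀), s₀, hS.2.2.1⟩ := by
  obtain ⟨hsinks, hmor, -, hadam⟩ := hS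
  refine ⟨⟨?_, ?_, rfl, ?_⟩, ?_⟩
  · rintro ⟨⟨v, m⟩, -⟩
    obtain ⟨o, t, h⟩ := hsinks (σ m v)
    exact ⟨o, ⟨(πS t, upd m o), t, rfl⟩, t, h, rfl, rfl⟩
  · rintro ⟨⟨v, m⟩, hv⟩ o q ⟨t, h, ht, _⟩
    simpa only [hσ m v hv, ht] using hmor h
  · rintro _ hvE o v' he ⟨⟨v, m⟩, hv⟩ rfl
    obtain ⟨t, ht, h⟩ := hadam v hvE o v' he (σ m v) (hσ m v hv)
    exact ⟨⟨(v', upd m o), t, ht⟩, rfl, t, h, ht, rfl⟩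
  · rintro p q ⟨_, _, _, hmem⟩
    exact (hmem.trans (hupd _)).symm

end Strategies

section RoundRobin

variable {C V VS : Type u} {f : C → C}

open scoped Classical in
/-- The memory update that waits for the letter `x` and then moves on to waiting for `f x`. -/
noncomputable def roundRobin (f : C → C) (x : C) (o : Option C) : C :=
  if o = some x then f x else x

theorem roundRobin_some_self (x : C) : roundRobin f x (some x) = f x :=
  if_pos rfl

theorem roundRobin_of_ne {x : C} {o : Option C} (h : o ≠ some x) : roundRobin f x o = x :=
  if_neg h

variable {w : ℕ → Option C} {m : ℕ → C}

theorem memory_eq_of_forall_ne (hm : ∀ n, m (n + 1) = roundRobin f (m n) (w n)) {N k : ℕ}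
    (hNk : N ≤ k) (h : ∀ n, N ≤ n → n < k → w n ≠ some (m n)) : m k = m N := by
  induction k, hNk using Nat.le_induction with
  | base => rfl
  | succ k hNk ih =>
    rw [hm, roundRobin_of_ne (h k hNk k.lt_succ_self),
      ih fun n hn hnk ↦ h n hn (hnk.trans k.lt_succ_self)]

theorem exists_eq_some_memory (hm : ∀ n, m (n + 1) = roundRobin f (m n) (w n))
    (hw : ∃ᶠ n in atTop, w n = some (m n)) (N : ℕ) : ∃ k ≥ N, w k = some (m N) ∧ m k = m N := by
  classical
  have hex := frequently_atTop.1 hw N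
  obtain ⟨hNk, hk⟩ := Nat.find_spec hex
  have hmk : m (Nat.find hex) = m N := memory_eq_of_forall_ne hm hNk fun n hn hlt h ↦
    Nat.find_min hex hlt ⟨hn, h⟩
  exact ⟨_, hNk, hmk ▸ hk, hmk⟩

theorem exists_eq_some_iterate_memory (hm : ∀ n, m (n + 1) = roundRobin f (m n) (w n))
    (hw : ∃ᶠ n in atTop, w n = some (m n)) (j N : ℕ) :
    ∃ k ≥ N, w k = some (f^[j] (m N)) := by
  induction j generalizing N with
  | zero =>
    obtain ⟨k, hNk, hk, -⟩ := exists_eq_some_memory hm hw N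
    exact ⟨k, hNk, hk⟩
  | succ j ih =>
    obtain ⟨k, hNk, hk, hmk⟩ := exists_eq_some_memory hm hw N
    have hnext : m (k + 1) = f (m N) := by rw [hm, hmk, hk, roundRobin_some_self]
    obtain ⟨n, hn, hwn⟩ := ih (k + 1)
    exact ⟨n, by omega, by rw [hwn, hnext, Function.iterate_succ_apply]⟩

theorem frequently_eq_some_of_frequently_eq_memory (hf : ∀ x y, ∃ j, f^[j] x = y)
    (hm : ∀ n, m (n + 1) = roundRobin f (m n) (w n)) (hw : ∃ᶠ n in atTop, w n = some (m n))
    (c : C) : ∃ᶠ n in atTop, w n = some c := by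
  refine frequently_atTop.2 fun N ↦ ?_
  obtain ⟨j, rfl⟩ := hf (m N) c
  exact exists_eq_some_iterate_memory hm hw j N

theorem frequently_eq_some_memory {S : Pregraph (Option C) VS} {πS : VS → V} {σ : C → V → VS}
    {α : Type*} [Preorder α] [WellFoundedLT α] {r : C → VS → α}
    (hr : ∀ x, S.IsRank {x}ᶜ (r x)) (hσ : ∀ x s, r x (σ x (πS s)) ≤ r x s)
    {p : ℕ → ↥{p : V × C | p.1 ∈ Set.range πS}} {γ : ℕ → Option C}
    (hp : (memoryStrategy S πS σ (roundRobin f)).InfPath p γ)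
    (hγ : ∃ᶠ n in atTop, (γ n).isSome) : ∃ᶠ n in atTop, γ n = some (p n).1.2 := by
  by_contra hne
  obtain ⟨N, hN⟩ := eventually_atTop.1 (not_frequently.1 hne)
  obtain ⟨x, hx⟩ : ∃ x, ∀ n ≥ N, (p n).1.2 = x := ⟨(p N).1.2, fun n hn ↦
    memory_eq_of_forall_ne (m := fun n ↦ (p n).1.2) (fun i ↦ (hp i).choose_spec.2.2) hn
      fun i hi _ ↦ hN i hi⟩
  let ρ : ℕ → α := fun n ↦ r x (σ x (p n).1.1)
  have hstep : ∀ n ≥ N, ∃ t, S.Edge (σ x (p n).1.1) (γ n) t ∧ ρ (n + 1) ≤ r x t := by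
    intro n hn
    obtain ⟨t, h, ht, _⟩ := hp n
    exact ⟨t, hx n hn ▸ h, by simpa only [ρ, ht] using hσ x t⟩
  have hlt : ∀ n ≥ N, (γ n).isSome → ρ (n + 1) < ρ n := by
    intro n hn hsome
    obtain ⟨t, h, ht⟩ := hstep n hn
    obtain ⟨c, hc⟩ := Option.isSome_iff_exists.1 hsome
    have hcx : c ≠ x := fun hcx ↦ hN n hn (by rw [hc, hcx, hx n hn])
    exact ht.trans_lt ((hr x).lt_of_mem hcx (hc ▸ h))
  have hle : ∀ n ≥ N, ρ (n + 1) ≤ ρ n := by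
    intro n hn
    by_cases hsome : (γ n).isSome
    · exact (hlt n hn hsome).le
    · obtain ⟨t, h, ht⟩ := hstep n hn
      rw [Option.not_isSome_iff_eq_none.1 hsome] at h
      exact ht.trans ((hr x).le_of_none h)
  exact not_frequently_lt_of_eventually_le (eventually_atTop.2 ⟨N, hle⟩)
    (hγ.mp (eventually_atTop.2 ⟨N, hlt⟩))

theorem memoryStrategy_roundRobin_sat [Countable C] (hf : ∀ x y, ∃ j, f^[j] x = y)
    {S : Pregraph (Option C) VS} {πS : VS → V} {σ : C → V → VS}
    {α : Type*} [Preorder α] [WellFoundedLT α] {r : C → VS → α}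
    (hr : ∀ x, S.IsRank {x}ᶜ (r x)) (hσ : ∀ x s, r x (σ x (πS s)) ≤ r x s) :
    (memoryStrategy S πS σ (roundRobin f)).Sat (epsObjective (allInfOften C)) := by
  rintro ⟨⟨v, x⟩, hv⟩ p γ - hp
  have : Nonempty C := ⟨x⟩
  exact mem_epsObjective_allInfOften.2 fun hγ ↦ frequently_eq_some_of_frequently_eq_memory hf
    (fun i ↦ (hp i).choose_spec.2.2) (frequently_eq_some_memory hr hσ hp hγ)

theorem exists_iterate_transitive (C : Type u) [Finite C] :
    ∃ f : C → C, ∀ x y, ∃ j, f^[j] x = y := by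
  have := Fintype.ofFinite C
  classical
  obtain ⟨f, hf, -⟩ := Finset.exists_cycleOn (Finset.univ : Finset C)
  refine ⟨f, fun x y ↦ ?_⟩
  obtain ⟨j, -, hj⟩ := hf.exists_pow_eq (Finset.mem_univ x) (Finset.mem_univ y)
  exact ⟨j, by rw [← Equiv.Perm.coe_pow, hj]⟩

theorem objEpsMemLE_allInfOften (C : Type u) [Finite C] [Nonempty C] :
    ObjEpsMemLE (allInfOften C) #C := by
  intro V G _ VEve v₀ hwin
  obtain ⟨VS, S, πS, s₀, hS, hsat⟩ := hwin.exists_sat isShiftClosed_allInfOften.epsObjective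
  have : Nonempty VS := ⟨s₀⟩
  choose r hr using hsat.exists_isRank_compl
  choose σ hσ using fun x ↦ exists_section_le πS (r x)
  obtain ⟨f, hf⟩ := exists_iterate_transitive C
  exact ⟨C, _, memoryStrategy S πS σ (roundRobin f), _, le_rfl,
    hS.isEpsStrategy_memoryStrategy (fun x ↦ Set.forall_mem_range.2 fun s ↦ (hσ x s).1)
      (fun x ↦ roundRobin_of_ne (Option.some_ne_none x).symm) (Classical.arbitrary C),
    memoryStrategy_roundRobin_sat hf hr (fun x s ↦ (hσ x s).2) _⟩

end RoundRobin

section Width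

variable {C V V' : Type u}

namespace Pregraph

theorem IsMorphism.injective {G : Pregraph C V} {H : Pregraph C V'} {φ : V → V'}
    (hφ : G.IsMorphism H φ) (hG : Pairwise fun i j ↦ ∃ c, G.Edge i c j)
    (hH : ∀ v c, ¬ H.Edge v c v) : Function.Injective φ := by
  intro i j hij
  by_contra hne
  obtain ⟨c, hc⟩ := hG hne
  have hloop := hφ hc
  rw [hij] at hloop
  exact hH (φ j) c hloop

theorem IsMorphism.isAntichain_range {G : Pregraph C V} {H : Pregraph C V'} {φ : V → V'}
    (hφ : G.IsMorphism H φ) (hG : Pairwise fun i j ↦ ∃ c, G.Edge i c j)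
    (hH : ∀ v c, ¬ H.Edge v c v) {le : V' → V' → Prop} [Std.Refl le] (hmono : H.MonotoneRel le) :
    IsAntichain le (Set.range φ) := by
  rintro _ ⟨i, rfl⟩ _ ⟨j, rfl⟩ hne hle
  obtain ⟨c, hc⟩ := hG (ne_of_apply_ne φ hne)
  exact hH (φ i) c (hmono (refl_of le _) (hφ hc) hle)

end Pregraph

end Width

theorem pairwise_edge_Gm (m : ℕ) : Pairwise fun i j ↦ ∃ c, (Gm m).Edge i c j :=
  fun _ _ hij ↦ hij.lt_or_gt.elim (fun h ↦ ⟨true, .inl ⟨rfl, h⟩⟩) fun h ↦ ⟨false, .inr ⟨rfl, h⟩⟩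

theorem sat_Gm (m : ℕ) : (Gm m).Sat bothInfOften := by
  rw [← allInfOften_bool]
  intro _ π γ _ hπ c
  cases c with
  | true =>
    exact (frequently_not_lt_succ π).mono fun n h ↦ ((hπ n).resolve_right fun hb ↦ h hb.2).1
  | false =>
    exact (frequently_not_lt_succ (OrderDual.toDual ∘ π)).mono fun n h ↦
      ((hπ n).resolve_left fun ha ↦ h ha.2).1

theorem embed_trees_not_graphs_general :
    ObjEpsMemLE bothInfOften 2 ∧
    ∀ m : ℕ,
      (Gm m).Sat bothInfOften ∧
      ∀ (VU : Type) (le : VU → VU → Prop) (U : Pregraph Bool VU),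
        Std.Refl le → U.MonotoneRel le →
        U.Sat bothInfOften →
        (∃ φ : Fin m → VU, (Gm m).IsMorphism U φ) →
        ∃ A : Set VU, IsAntichain le A ∧ #(↥A) = (m : Cardinal) := by
  refine ⟨?_, fun m ↦ ⟨sat_Gm m, ?_⟩⟩
  · simpa only [allInfOften_bool, mk_bool] using objEpsMemLE_allInfOften Bool
  · rintro VU le U _ hmono hsat ⟨φ, hφ⟩
    rw [← allInfOften_bool] at hsat
    have hloop (v : VU) (c : Bool) : ¬ U.Edge v c v :=
      hsat.not_edge_self (const_notMem_allInfOften c) v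
    have hinj : Function.Injective φ := hφ.injective (pairwise_edge_Gm m) hloop
    exact ⟨Set.range φ, hφ.isAntichain_range (pairwise_edge_Gm m) hloop hmono,
      (mk_range_eq φ hinj).trans (mk_fin m)⟩

/-- The objective "infinitely many `a`'s and infinitely many `b`'s" has
ε-memory ≤ 2, each `G_m` satisfies it, and yet every monotone graph satisfying it into
which `G_m` maps contains an antichain of cardinality `m`. -/
theorem embed_trees_not_graphs :
    ObjEpsMemLE bothInfOften 2 ∧
    ∀ m : ℕ, 1 ≤ m →
      (Gm m).Sat bothInfOften ∧
      ∀ (VU : Type) (le : VU → VU → Prop) (U : Pregraph Bool VU),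
        IsPartialOrder VU le → U.MonotoneRel le → U.NoSinks →
        U.Sat bothInfOften →
        (∃ φ : Fin m → VU, (Gm m).IsMorphism U φ) →
        ∃ A : Set VU, IsAntichain le A ∧ #(↥A) = (m : Cardinal) :=
  embed_trees_not_graphs_general.imp_right fun h m _ ↦ (h m).imp_right
    fun h VU le U hle hmono _ ↦ h VU le U hle.toRefl hmono
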